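/- Let G be a finite simple graph with vertex set V. (a) Every essential set S ⊊ V is the union of two distinct orbits of the automorphism group of G. (b) Conversely, if the automorphism group of G has at least three orbits on V, then for any two distinct orbits O_i ≠ O_j, the set O_i ∪ O_j is an essential set. -/

import Mathlib

/-!
Distinct orbits are disjoint, so two of them can have the same trace on `Sᶜ` only if both traces are
empty. Hence `γ_{V∖S} ≠ γ_V` exactly when `S` contains two distinct orbits
(`not_indis_compl_iff`), and an essential set is a proper subset of `V` that is minimal with this
property. A union of two distinct orbits contains no orbits other than these two, so the minimal
sets are exactly such unions; with at least three orbits such a union is not all of `V`.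
-/

/-- The orbit of a vertex `x` under the automorphism group of the graph `G`:
`O(x) = {φ(x) : φ an automorphism of G}`. -/
def orb {V : Type*} (G : SimpleGraph V) (x : V) : Set V :=
  {y | ∃ φ : G ≃g G, φ x = y}

/-- The indiscernibility relation `x ≡_A y` iff `O(x) ∩ A = O(y) ∩ A`. -/
def Indis {V : Type*} (G : SimpleGraph V) (A : Set V) (x y : V) : Prop :=
  orb G x ∩ A = orb G y ∩ A

/-- The `≡_A`-equivalence class `O_A(x)` of a vertex `x`. -/
def eqCls {V : Type*} (G : SimpleGraph V) (A : Set V) (x : V) : Set V :=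
  {y | Indis G A x y}

/-- `O(A) = ⋃_{a ∈ A} O(a)`. -/
def orbSet {V : Type*} (G : SimpleGraph V) (A : Set V) : Set V :=
  ⋃ a ∈ A, orb G a

/-- Lower approximation `L_A(Q) = {x | O_A(x) ⊆ Q}`. -/
def lowerApprox {V : Type*} (G : SimpleGraph V) (A Q : Set V) : Set V :=
  {x | eqCls G A x ⊆ Q}

/-- Upper approximation `U_A(Q) = {x | O_A(x) ∩ Q ≠ ∅}`. -/
def upperApprox {V : Type*} (G : SimpleGraph V) (A Q : Set V) : Set V :=
  {x | (eqCls G A x ∩ Q).Nonempty}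

/-- A proper subset `S ⊊ V` is essential (w.r.t. the full attribute set `V`) if
`γ_{V∖S} ≠ γ_V` while `γ_{V∖Q} = γ_V` for every proper subset `Q ⊊ S`. -/
def Essential {V : Type*} (G : SimpleGraph V) (S : Set V) : Prop :=
  S ⊂ Set.univ ∧
  ¬ (∀ x y : V, Indis G Sᶜ x y ↔ Indis G Set.univ x y) ∧
  ∀ Q : Set V, Q ⊂ S → (∀ x y : V, Indis G Qᶜ x y ↔ Indis G Set.univ x y)

lemma mem_orb_self {V : Type*} (G : SimpleGraph V) (x : V) : x ∈ orb G x :=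
  ⟨RelIso.refl _, rfl⟩

lemma orb_eq_of_mem {V : Type*} {G : SimpleGraph V} {x y : V} (h : y ∈ orb G x) :
    orb G y = orb G x := by
  obtain ⟨φ, rfl⟩ := h
  ext z
  constructor
  · rintro ⟨ψ, rfl⟩
    exact ⟨φ.trans ψ, rfl⟩
  · rintro ⟨ψ, rfl⟩
    exact ⟨φ.symm.trans ψ, by simp⟩

lemma indis_univ_iff {V : Type*} {G : SimpleGraph V} {x y : V} :
    Indis G Set.univ x y ↔ orb G x = orb G y := by
  simp [Indis]

/-- Removing the attributes in `S` changes the partition iff `S` contains two distinct orbits. -/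
lemma not_indis_compl_iff {V : Type*} (G : SimpleGraph V) (S : Set V) :
    ¬ (∀ x y : V, Indis G Sᶜ x y ↔ Indis G Set.univ x y) ↔
      ∃ x y : V, orb G x ≠ orb G y ∧ orb G x ⊆ S ∧ orb G y ⊆ S := by
  constructor
  · intro h
    by_contra! hc
    refine h fun x y => ⟨fun hxy => ?_, fun hxy => ?_⟩
    · rw [indis_univ_iff]
      by_contra hne
      -- A point of one orbit outside `S` would lie in both orbits.
      have key : ∀ {a b : V}, orb G a ≠ orb G b → Indis G Sᶜ a b → orb G a ⊆ S := by
        intro a b hab hi z hz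
        by_contra hzS
        have hzb : z ∈ orb G b ∩ Sᶜ := by
          rw [← show orb G a ∩ Sᶜ = orb G b ∩ Sᶜ from hi]
          exact ⟨hz, hzS⟩
        exact hab ((orb_eq_of_mem hz).symm.trans (orb_eq_of_mem hzb.1))
      exact hc x y hne (key hne hxy) (key (Ne.symm hne) hxy.symm)
    · rw [indis_univ_iff] at hxy
      rw [Indis, hxy]
  · rintro ⟨x, y, hne, hx, hy⟩ h
    refine hne (indis_univ_iff.1 ((h x y).1 ?_))
    rw [Indis, ← Set.sdiff_eq, ← Set.sdiff_eq, Set.sdiff_eq_empty.2 hx, Set.sdiff_eq_empty.2 hy]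

/-- (a) every essential set is the union of two distinct orbits of the
automorphism group of `G`; (b) if `G` has at least three orbits, then the union of any
two distinct orbits is an essential set. -/
theorem stmt_19 {V : Type*} [Fintype V] (G : SimpleGraph V) :
    (∀ S : Set V, Essential G S →
      ∃ x y : V, orb G x ≠ orb G y ∧ S = orb G x ∪ orb G y) ∧
    (3 ≤ {s : Set V | ∃ x : V, s = orb G x}.ncard →
      ∀ x y : V, orb G x ≠ orb G y → Essential G (orb G x ∪ orb G y)) := by
  refine ⟨?_, ?_⟩
  · rintro S ⟨-, hS, hmin⟩
    obtain ⟨x, y, hne, hx, hy⟩ := (not_indis_compl_iff G S).1 hS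
    refine ⟨x, y, hne, ?_⟩
    by_contra hSne
    exact (not_indis_compl_iff G _).2
      ⟨x, y, hne, Set.subset_union_left, Set.subset_union_right⟩
      (hmin _ ((Set.union_subset hx hy).ssubset_of_ne (Ne.symm hSne)))
  · intro h3 x y hne
    refine ⟨Set.ssubset_univ_iff.2 fun huniv => ?_, (not_indis_compl_iff G _).2
      ⟨x, y, hne, Set.subset_union_left, Set.subset_union_right⟩, fun Q hQ => ?_⟩
    · have hsub : {s : Set V | ∃ x : V, s = orb G x} ⊆ {orb G x, orb G y} := by
        rintro _ ⟨z, rfl⟩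
        have hz : z ∈ orb G x ∪ orb G y := huniv ▸ Set.mem_univ z
        exact hz.imp orb_eq_of_mem orb_eq_of_mem
      have h2 := (Set.ncard_le_ncard hsub (Set.toFinite _)).trans (Set.ncard_pair hne).le
      omega
    · by_contra hc
      obtain ⟨a, b, hab, ha, hb⟩ := (not_indis_compl_iff G Q).1 hc
      apply hQ.2
      -- `{orb a, orb b} = {orb x, orb y}`, so `Q` contains both `orb x` and `orb y`.
      rcases hQ.1 (ha (mem_orb_self G a)) with h1 | h1 <;>
        rcases hQ.1 (hb (mem_orb_self G b)) with h2 | h2 <;>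
        rw [orb_eq_of_mem h1] at ha hab <;> rw [orb_eq_of_mem h2] at hb hab
      · exact absurd rfl hab
      · exact Set.union_subset ha hb
      · exact Set.union_subset hb ha
      · exact absurd rfl hab
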